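/- For every α with 0 < α < 1 there is a constant C (depending on α, n, Ω, χ, ψ) such that for every bounded continuous f : ℝⁿ → ℝ with ‖f‖_{Λ_α} < ∞ the following holds: for every x ∈ ℝⁿ the principal-value limit Tf(x) = lim_{ε→0⁺} ∫_{{y : |x−y|>ε}} H(x,y) f(y) dy exists, and ‖Tf‖_{Λ_α} ≤ C ‖f‖_{Λ_α}. -/

import Mathlib

open MeasureTheory Metric Set Filter Topology

/-- The inhomogeneous Hölder (Lipschitz-α) norm
`‖f‖_{Λ_α} = sup |f| + sup_{x ≠ y} |f(x) − f(y)|/|x−y|^α`. -/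
noncomputable def lambdaNorm (n : ℕ) (α : ℝ) (f : EuclideanSpace ℝ (Fin n) → ℝ) : ℝ :=
  (⨆ x : EuclideanSpace ℝ (Fin n), |f x|) +
  ⨆ p : {p : EuclideanSpace ℝ (Fin n) × EuclideanSpace ℝ (Fin n) // p.1 ≠ p.2},
    |f p.1.1 - f p.1.2| / ‖p.1.1 - p.1.2‖ ^ α

/-!
With `s = 1 / (1 + u)` the kernel becomes `H(x, y) = χ(y) ∫₀^∞ (1 + u)^(n-1) φₓ(u (x - y)) du`,
where `φₓ(v) = χ(x) ψ(x + v)` is a bump of integral zero depending on `x` in a Lipschitz way. Put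
`g = χ f`. The scales `u ≤ 1` form a bounded kernel that is Lipschitz in `x`. At a scale `u > 1` the
vanishing integral allows `g(y)` to be replaced by `g(y) - g(x)`; the slice at scale `u`
is then `O(u^(-1-α))`, and its values at `x` and `x'` differ by `O(‖x - x'‖ u^(-α))` as long as
`u ‖x - x'‖ ≤ 1`. Integrating the better of the two bounds over `u > 1` gives `O(‖x - x'‖^α)`.

The truncation `‖x - y‖ > ε` spoils the cancellation. The part of `g(x) φₓ(u (x - y))` it removes
does not vanish in the limit: summed over all scales it leaves the term `g(x) ∫ φₓ(v) log ‖v‖ dv`,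
which is Hölder in `x` as well.
-/

open Module

section HolderBound

variable {E : Type*} [NormedAddCommGroup E] {α β A B M N : ℝ} {f g : E → ℝ}

/-- Membership in `Λ_α` with quantitative control: `M` bounds both `sup |f|` and the homogeneous
seminorm `‖f‖_{Λ̇_α}`. For `α = 1` this says that `f` is bounded and Lipschitz. -/
structure HolderBound (α M : ℝ) (f : E → ℝ) : Prop where
  abs_le : ∀ x, |f x| ≤ M
  abs_sub_le : ∀ x y, |f x - f y| ≤ M * ‖x - y‖ ^ α

theorem HolderBound.nonneg (hf : HolderBound α M f) : 0 ≤ M :=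
  (abs_nonneg _).trans (hf.abs_le 0)

theorem HolderBound.continuous (hf : HolderBound α M f) (hα : 0 < α) : Continuous f := by
  refine continuous_iff_continuousAt.2 fun x => tendsto_iff_norm_sub_tendsto_zero.2 ?_
  have hmodulus : Continuous fun y => M * ‖y - x‖ ^ α :=
    continuous_const.mul ((continuous_id.sub continuous_const).norm.rpow_const
      fun _ => Or.inr hα.le)
  exact squeeze_zero (fun _ => norm_nonneg _) (fun y => hf.abs_sub_le y x)
    (by simpa [hα.ne'] using hmodulus.tendsto x)

theorem HolderBound.mono (hf : HolderBound α M f) (hMN : M ≤ N) : HolderBound α N f :=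
  ⟨fun x => (hf.abs_le x).trans hMN, fun x y => (hf.abs_sub_le x y).trans (by gcongr)⟩

theorem HolderBound.add (hf : HolderBound α M f) (hg : HolderBound α N g) :
    HolderBound α (M + N) fun x => f x + g x where
  abs_le x := (abs_add_le _ _).trans (add_le_add (hf.abs_le x) (hg.abs_le x))
  abs_sub_le x y := by
    rw [add_sub_add_comm, add_mul]
    exact (abs_add_le _ _).trans (add_le_add (hf.abs_sub_le x y) (hg.abs_sub_le x y))

theorem HolderBound.mul (hf : HolderBound α M f) (hg : HolderBound α N g) :
    HolderBound α (2 * M * N) fun x => f x * g x where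
  abs_le x := by
    have hM := hf.nonneg
    have hN := hg.nonneg
    rw [abs_mul]
    calc |f x| * |g x| ≤ M * N := by gcongr; exacts [hf.abs_le x, hg.abs_le x]
      _ ≤ 2 * M * N := by nlinarith [mul_nonneg hM hN]
  abs_sub_le x y := by
    have hM := hf.nonneg
    calc |f x * g x - f y * g y| = |f x * (g x - g y) + (f x - f y) * g y| := by ring_nf
      _ ≤ |f x| * |g x - g y| + |f x - f y| * |g y| := by
        simpa only [abs_mul] using abs_add_le (f x * (g x - g y)) ((f x - f y) * g y)
      _ ≤ M * (N * ‖x - y‖ ^ α) + M * ‖x - y‖ ^ α * N := by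
        gcongr
        exacts [hf.abs_le x, hg.abs_sub_le x y, hf.abs_sub_le x y, hg.abs_le y]
      _ = 2 * M * N * ‖x - y‖ ^ α := by ring

theorem HolderBound.of_norm_sub_le_one (hα : 0 ≤ α) (hbound : ∀ x, |f x| ≤ M)
    (hlocal : ∀ x y, x ≠ y → ‖x - y‖ ≤ 1 → |f x - f y| ≤ M * ‖x - y‖ ^ α) :
    HolderBound α (2 * M) f := by
  have hM : 0 ≤ M := (abs_nonneg _).trans (hbound 0)
  refine ⟨fun x => (hbound x).trans (by linarith), fun x y => ?_⟩
  rcases eq_or_ne x y with rfl | hxy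
  · rw [sub_self, abs_zero]
    positivity
  rcases le_total ‖x - y‖ 1 with hle | hge
  · exact (hlocal x y hxy hle).trans (by gcongr; linarith)
  · calc |f x - f y| ≤ |f x| + |f y| := abs_sub _ _
      _ ≤ 2 * M * 1 := by linarith [hbound x, hbound y]
      _ ≤ 2 * M * ‖x - y‖ ^ α := by gcongr; exact Real.one_le_rpow hge hα

theorem HolderBound.of_exponent_le (hf : HolderBound β M f) (hα : 0 ≤ α) (hαβ : α ≤ β) :
    HolderBound α (2 * M) f := by
  refine .of_norm_sub_le_one hα hf.abs_le fun x y hxy hle => (hf.abs_sub_le x y).trans ?_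
  have hM := hf.nonneg
  gcongr M * ?_
  exact Real.rpow_le_rpow_of_exponent_ge (norm_pos_iff.2 (sub_ne_zero.2 hxy)) hle hαβ

theorem HolderBound.exists_of_lipschitzWith {K : NNReal} (hf : LipschitzWith K f)
    (hfc : HasCompactSupport f) : ∃ M, HolderBound 1 M f := by
  obtain ⟨C, hC⟩ := hf.continuous.bounded_above_of_compact_support hfc
  refine ⟨max C K, fun x => (hC x).trans (le_max_left _ _), fun x y => ?_⟩
  rw [Real.rpow_one]
  exact (hf.norm_sub_le x y).trans (by gcongr; exact le_max_right _ _)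

theorem abs_setIntegral_le_of_abs_le {X : Type*} [MeasurableSpace X] {μ : Measure X} {S : Set X}
    {F b : X → ℝ} (hS : MeasurableSet S) (hb : IntegrableOn b S μ) (hF : ∀ y ∈ S, |F y| ≤ b y) :
    |∫ y in S, F y ∂μ| ≤ ∫ y in S, b y ∂μ := by
  rw [← Real.norm_eq_abs]
  exact norm_integral_le_of_norm_le hb (ae_restrict_of_forall_mem hS hF)

theorem holderBound_integral_mul {X : Type*} [MeasurableSpace X] {ν : Measure X} {k : E → X → ℝ}
    {G : X → ℝ} (hG : Integrable G ν) (hk : ∀ y, HolderBound α N fun x => k x y)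
    (hint : ∀ x, Integrable (fun y => G y * k x y) ν) :
    HolderBound α (N * ∫ y, |G y| ∂ν) fun x => ∫ y, G y * k x y ∂ν where
  abs_le x := by
    rw [← integral_const_mul, ← Real.norm_eq_abs]
    refine norm_integral_le_of_norm_le (hG.abs.const_mul N) (ae_of_all _ fun y => ?_)
    rw [norm_mul, mul_comm]
    exact mul_le_mul_of_nonneg_right ((hk y).abs_le x) (norm_nonneg _)
  abs_sub_le x x' := by
    rw [← integral_sub (hint x) (hint x'), mul_right_comm, ← integral_const_mul,
      ← Real.norm_eq_abs]
    refine norm_integral_le_of_norm_le (hG.abs.const_mul _) (ae_of_all _ fun y => ?_)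
    rw [← mul_sub, norm_mul, mul_comm]
    exact mul_le_mul_of_nonneg_right ((hk y).abs_sub_le x x') (norm_nonneg _)

theorem integral_Ioi_rpow_neg_one_sub (hα : 0 < α) {a : ℝ} (ha : 0 < a) :
    ∫ u in Ioi a, u ^ (-1 - α) = a ^ (-α) / α := by
  rw [integral_Ioi_rpow_of_lt (by linarith) ha, show -1 - α + 1 = -α by ring, neg_div_neg_eq]

theorem integrableOn_Ioi_rpow_neg_one_sub (hα : 0 < α) {a : ℝ} (ha : 0 < a) :
    IntegrableOn (fun u : ℝ => u ^ (-1 - α)) (Ioi a) :=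
  integrableOn_Ioi_rpow_of_lt (by linarith) ha

theorem abs_integral_Ioc_one_inv_le (hα : α < 1) (hB : 0 ≤ B) {h : ℝ} (h0 : 0 < h) (h1 : h ≤ 1)
    {F : ℝ → ℝ} (hF : ∀ u ∈ Ioc 1 h⁻¹, |F u| ≤ B * h * u ^ (-α)) :
    |∫ u in Ioc 1 h⁻¹, F u| ≤ B / (1 - α) * h ^ α := by
  have h1' : 1 ≤ h⁻¹ := (one_le_inv₀ h0).2 h1
  have hint : IntegrableOn (fun u : ℝ => u ^ (-α)) (Ioc 1 h⁻¹) :=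
    (intervalIntegrable_iff_integrableOn_Ioc_of_le h1').1
      (intervalIntegral.intervalIntegrable_rpow' (by linarith))
  have hpow : h * h⁻¹ ^ (1 - α) = h ^ α := by
    rw [Real.inv_rpow h0.le, Real.rpow_sub h0, Real.rpow_one, inv_div, mul_div_cancel₀ _ h0.ne']
  calc |∫ u in Ioc 1 h⁻¹, F u| ≤ ∫ u in Ioc 1 h⁻¹, B * h * u ^ (-α) :=
        abs_setIntegral_le_of_abs_le measurableSet_Ioc (hint.const_mul _) hF
    _ = B * h * ((h⁻¹ ^ (1 - α) - 1) / (1 - α)) := by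
        rw [integral_const_mul, ← intervalIntegral.integral_of_le h1',
          integral_rpow (Or.inl (by linarith)), Real.one_rpow, neg_add_eq_sub]
    _ ≤ B * h * (h⁻¹ ^ (1 - α) / (1 - α)) := by gcongr; linarith
    _ = B / (1 - α) * h ^ α := by rw [← hpow]; ring

theorem abs_integral_Ioi_le (hα : 0 < α) {a : ℝ} (ha : 0 < a) {F : ℝ → ℝ}
    (hF : ∀ u ∈ Ioi a, |F u| ≤ A * u ^ (-1 - α)) :
    |∫ u in Ioi a, F u| ≤ A * (a ^ (-α) / α) := by
  rw [← integral_Ioi_rpow_neg_one_sub hα ha, ← integral_const_mul]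
  exact abs_setIntegral_le_of_abs_le measurableSet_Ioi
    ((integrableOn_Ioi_rpow_neg_one_sub hα ha).const_mul _) hF

-- The two estimates balance at the scale `u = ‖x - y‖⁻¹`, where the integral is split.
theorem holderBound_integral_scales (hα0 : 0 < α) (hα1 : α < 1) (hB : 0 ≤ B) {G : E → ℝ → ℝ}
    (hmeas : ∀ x, AEStronglyMeasurable (G x) (volume.restrict (Ioi 1)))
    (hsize : ∀ x, ∀ u ∈ Ioi 1, |G x u| ≤ A * u ^ (-1 - α))
    (hdiff : ∀ x y, ∀ u ∈ Ioi 1, u * ‖x - y‖ ≤ 1 →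
      |G x u - G y u| ≤ B * ‖x - y‖ * u ^ (-α)) :
    HolderBound α (2 * (B / (1 - α) + 2 * A / α)) fun x => ∫ u in Ioi 1, G x u := by
  have hbound (x : E) : |∫ u in Ioi 1, G x u| ≤ A / α := by
    simpa [div_eq_mul_inv] using abs_integral_Ioi_le hα0 one_pos (hsize x)
  have hA : 0 ≤ A / α := (abs_nonneg _).trans (hbound 0)
  have hBα : 0 ≤ B / (1 - α) := by positivity
  have hint (x : E) : IntegrableOn (G x) (Ioi 1) :=
    ((integrableOn_Ioi_rpow_neg_one_sub hα0 one_pos).const_mul A).mono' (hmeas x)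
      (ae_restrict_of_forall_mem measurableSet_Ioi (hsize x))
  refine .of_norm_sub_le_one hα0.le (fun x => (hbound x).trans ?_) fun x y hxy hle => ?_
  · rw [mul_div_assoc]
    linarith
  set h := ‖x - y‖
  have h0 : 0 < h := norm_pos_iff.2 (sub_ne_zero.2 hxy)
  have h1 : 1 ≤ h⁻¹ := (one_le_inv₀ h0).2 hle
  have hsub : IntegrableOn (fun u => G x u - G y u) (Ioi 1) := (hint x).sub (hint y)
  have hlow : |∫ u in Ioc 1 h⁻¹, (G x u - G y u)| ≤ B / (1 - α) * h ^ α :=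
    abs_integral_Ioc_one_inv_le hα1 hB h0 hle fun u hu =>
      hdiff x y u hu.1 ((le_mul_inv_iff₀ h0).1 (by simpa using hu.2))
  have hhigh : |∫ u in Ioi h⁻¹, (G x u - G y u)| ≤ 2 * A * (h⁻¹ ^ (-α) / α) :=
    abs_integral_Ioi_le hα0 (inv_pos.2 h0) fun u hu => by
      have hu1 : u ∈ Ioi 1 := h1.trans_lt hu
      linarith [abs_sub (G x u) (G y u), hsize x u hu1, hsize y u hu1]
  rw [Real.inv_rpow h0.le, ← Real.rpow_neg h0.le, neg_neg] at hhigh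
  rw [← integral_sub (hint x) (hint y), ← Ioc_union_Ioi_eq_Ioi h1,
    setIntegral_union (Ioc_disjoint_Ioi le_rfl) measurableSet_Ioi
      (hsub.mono_set Ioc_subset_Ioi_self) (hsub.mono_set (Ioi_subset_Ioi h1))]
  calc _ ≤ B / (1 - α) * h ^ α + 2 * A * (h ^ α / α) :=
        (abs_add_le _ _).trans (add_le_add hlow hhigh)
    _ = (B / (1 - α) + 2 * A / α) * h ^ α := by ring

end HolderBound

section LambdaNorm

variable {n : ℕ} {α M : ℝ} {f : EuclideanSpace ℝ (Fin n) → ℝ}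

theorem holderBound_lambdaNorm (hM : ∃ M, ∀ x, |f x| ≤ M)
    (hK : ∃ K, ∀ x y, |f x - f y| ≤ K * ‖x - y‖ ^ α) : HolderBound α (lambdaNorm n α f) f := by
  obtain ⟨M, hM⟩ := hM
  obtain ⟨K, hK⟩ := hK
  have hsup : 0 ≤ ⨆ x, |f x| := Real.iSup_nonneg fun _ => abs_nonneg _
  have hsemi : 0 ≤ ⨆ p : {p : EuclideanSpace ℝ (Fin n) × EuclideanSpace ℝ (Fin n) // p.1 ≠ p.2},
      |f p.1.1 - f p.1.2| / ‖p.1.1 - p.1.2‖ ^ α := Real.iSup_nonneg fun _ => by positivity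
  have hpow {x y : EuclideanSpace ℝ (Fin n)} (hxy : x ≠ y) : 0 < ‖x - y‖ ^ α :=
    Real.rpow_pos_of_pos (norm_pos_iff.2 (sub_ne_zero.2 hxy)) _
  refine ⟨fun x => ?_, fun x y => ?_⟩
  · exact (le_ciSup ⟨M, forall_mem_range.2 hM⟩ x).trans (le_add_of_nonneg_right hsemi)
  rcases eq_or_ne x y with rfl | hxy
  · rw [sub_self, abs_zero]
    exact mul_nonneg (add_nonneg hsup hsemi) (by positivity)
  · rw [← div_le_iff₀ (hpow hxy)]
    refine (le_ciSup (f := fun p : {p : EuclideanSpace ℝ (Fin n) × EuclideanSpace ℝ (Fin n) //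
      p.1 ≠ p.2} => |f p.1.1 - f p.1.2| / ‖p.1.1 - p.1.2‖ ^ α) ⟨K, ?_⟩ ⟨(x, y), hxy⟩).trans
      (le_add_of_nonneg_left hsup)
    exact forall_mem_range.2 fun p => (div_le_iff₀ (hpow p.2)).2 (hK _ _)

theorem HolderBound.lambdaNorm_le (hf : HolderBound α M f) : lambdaNorm n α f ≤ 2 * M := by
  rw [two_mul]
  refine add_le_add (ciSup_le hf.abs_le) (Real.iSup_le (fun p => ?_) hf.nonneg)
  exact (div_le_iff₀ (Real.rpow_pos_of_pos (norm_pos_iff.2 (sub_ne_zero.2 p.2)) _)).2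
    (hf.abs_sub_le _ _)

end LambdaNorm

section MeasurableSets

variable {E : Type*} [NormedAddCommGroup E] [MeasurableSpace E] [BorelSpace E]

theorem measurableSet_lt_norm (ε : ℝ) : MeasurableSet {v : E | ε < ‖v‖} :=
  measurableSet_lt measurable_const measurable_norm

theorem measurableSet_lt_norm_sub (x : E) (ε : ℝ) : MeasurableSet {y : E | ε < ‖x - y‖} :=
  measurableSet_lt measurable_const (continuous_const.sub continuous_id).norm.measurable

end MeasurableSets

section Slices

variable {E : Type*} [NormedAddCommGroup E] [NormedSpace ℝ E] [MeasurableSpace E]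
  {μ : Measure E} {α ρ r u K L M : ℝ} {f f' g F : E → ℝ} {S : Set E}

/-- A continuous function of integral zero that vanishes outside the closed ball of radius `ρ`
about the origin: the profile whose dilates make up the singular kernel. -/
structure MeanZeroBump (μ : Measure E) (ρ : ℝ) (f : E → ℝ) : Prop where
  radius_nonneg : 0 ≤ ρ
  continuous : Continuous f
  norm_le_of_ne_zero : ∀ v, f v ≠ 0 → ‖v‖ ≤ ρ
  integral_eq_zero : ∫ v, f v ∂μ = 0

theorem MeanZeroBump.norm_sub_le (hf : MeanZeroBump μ ρ f) (hu : 0 < u) {x y : E}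
    (hxy : f (u • (x - y)) ≠ 0) : ‖x - y‖ ≤ ρ / u := by
  have hnorm := hf.norm_le_of_ne_zero _ hxy
  rw [norm_smul, Real.norm_of_nonneg hu.le] at hnorm
  rwa [le_div_iff₀' hu]

theorem MeanZeroBump.norm_sub_le_of_sub_ne_zero (hf : MeanZeroBump μ ρ f)
    (hf' : MeanZeroBump μ ρ f') (hu : 0 < u) {x x' y : E} (hux : u * ‖x - x'‖ ≤ 1)
    (hy : f (u • (x - y)) - f' (u • (x' - y)) ≠ 0) : ‖x - y‖ ≤ (ρ + 1) / u := by
  rw [le_div_iff₀' hu]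
  by_cases hfy : f (u • (x - y)) = 0
  · have hf'y : f' (u • (x' - y)) ≠ 0 := fun h => hy (by rw [hfy, h, sub_zero])
    have hx'y := (le_div_iff₀' hu).1 (hf'.norm_sub_le hu hf'y)
    nlinarith [norm_sub_le_norm_sub_add_norm_sub x x' y]
  · linarith [(le_div_iff₀' hu).1 (hf.norm_sub_le hu hfy)]

/-- The constant in the estimate of an integral over a ball of radius `r / u` weighted by
`(1 + u) ^ (dim E - 1)`, see `abs_weight_mul_setIntegral_le`. -/
noncomputable def sliceConst (μ : Measure E) (α r : ℝ) : ℝ :=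
  2 ^ (finrank ℝ E - 1) * (r ^ finrank ℝ E * r ^ α) * μ.real (ball 0 1)

theorem sliceConst_nonneg (hr : 0 ≤ r) : 0 ≤ sliceConst μ α r := by
  unfold sliceConst
  positivity

variable [BorelSpace E] [FiniteDimensional ℝ E] [μ.IsAddHaarMeasure]

theorem abs_setIntegral_le_of_support_subset_closedBall (hr : 0 ≤ r) (x : E)
    (hS : MeasurableSet S) (hbound : ∀ y, ‖x - y‖ ≤ r → |F y| ≤ K)
    (hsupp : ∀ y, F y ≠ 0 → ‖x - y‖ ≤ r) :
    |∫ y in S, F y ∂μ| ≤ K * (r ^ finrank ℝ E * μ.real (ball 0 1)) := by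
  have hmem {y : E} : y ∈ closedBall x r ↔ ‖x - y‖ ≤ r := by
    rw [mem_closedBall, dist_comm, dist_eq_norm]
  have hK : 0 ≤ K := (abs_nonneg _).trans (hbound x (by simpa using hr))
  have hinter : ∫ y in S ∩ closedBall x r, F y ∂μ = ∫ y in S, F y ∂μ :=
    (setIntegral_eq_of_subset_of_forall_sdiff_eq_zero hS inter_subset_left fun y hy =>
      by_contra fun hFy => hy.2 ⟨hy.1, hmem.2 (hsupp y hFy)⟩).symm
  rw [← hinter, ← Measure.addHaar_real_closedBall μ x hr]
  calc |∫ y in S ∩ closedBall x r, F y ∂μ| ≤ K * μ.real (S ∩ closedBall x r) := by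
        rw [← Real.norm_eq_abs]
        exact norm_setIntegral_le_of_norm_le_const
          ((measure_mono inter_subset_right).trans_lt measure_closedBall_lt_top)
          fun y hy => hbound y (hmem.1 hy.2)
    _ ≤ K * μ.real (closedBall x r) := by
        gcongr
        exacts [measure_closedBall_lt_top.ne, inter_subset_right]

theorem abs_weight_mul_setIntegral_le [Nontrivial E] (hα : 0 ≤ α) (hr : 0 ≤ r) (hK : 0 ≤ K)
    (hu : 1 ≤ u) (x : E) (hS : MeasurableSet S) (hF : ∀ y, |F y| ≤ K * ‖x - y‖ ^ α)
    (hsupp : ∀ y, F y ≠ 0 → ‖x - y‖ ≤ r / u) :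
    |(1 + u) ^ (finrank ℝ E - 1) * ∫ y in S, F y ∂μ| ≤ K * sliceConst μ α r * u ^ (-1 - α) := by
  have hu0 : 0 < u := by linarith
  have hint : |∫ y in S, F y ∂μ| ≤
      K * (r / u) ^ α * ((r / u) ^ finrank ℝ E * μ.real (ball 0 1)) :=
    abs_setIntegral_le_of_support_subset_closedBall (by positivity) x hS
      (fun y hy => (hF y).trans (by gcongr)) hsupp
  obtain ⟨k, hk⟩ := Nat.exists_eq_add_one.2 (finrank_pos (R := ℝ) (M := E))
  rw [abs_mul, abs_of_nonneg (by positivity)]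
  calc (1 + u) ^ (finrank ℝ E - 1) * |∫ y in S, F y ∂μ|
      ≤ (2 * u) ^ (finrank ℝ E - 1) *
          (K * (r / u) ^ α * ((r / u) ^ finrank ℝ E * μ.real (ball 0 1))) := by
        gcongr
        linarith
    _ = K * sliceConst μ α r * u ^ (-1 - α) := by
        rw [sliceConst, hk, Nat.add_sub_cancel, Real.div_rpow hr hu0.le, Real.rpow_sub hu0,
          Real.rpow_neg_one, mul_pow, div_pow]
        field_simp
        ring

theorem integral_comp_smul_sub (f : E → ℝ) (x : E) (hu : 0 < u) :
    ∫ y, f (u • (x - y)) ∂μ = (u ^ finrank ℝ E)⁻¹ * ∫ v, f v ∂μ := by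
  rw [integral_sub_left_eq_self (fun z => f (u • z)) μ x, Measure.integral_comp_smul,
    smul_eq_mul, abs_of_nonneg (by positivity)]

/-- The integral of `f` outside the ball of radius `r`. -/
noncomputable def tailIntegral (μ : Measure E) (f : E → ℝ) (r : ℝ) : ℝ :=
  ∫ v in {v | r < ‖v‖}, f v ∂μ

theorem setIntegral_comp_smul_sub (f : E → ℝ) (x : E) (hu : 0 < u) (ε : ℝ) :
    ∫ y in {y | ε < ‖x - y‖}, f (u • (x - y)) ∂μ =
      (u ^ finrank ℝ E)⁻¹ * tailIntegral μ f (u * ε) := by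
  rw [tailIntegral, ← integral_indicator (measurableSet_lt_norm _),
    ← integral_comp_smul_sub _ x hu, ← integral_indicator (measurableSet_lt_norm_sub x ε)]
  refine integral_congr_ae (Eventually.of_forall fun y => ?_)
  simp only [indicator, mem_ofPred_eq, norm_smul, Real.norm_of_nonneg hu.le,
    mul_lt_mul_iff_right₀ hu]

theorem MeanZeroBump.integrable_mul_comp (hf : MeanZeroBump μ ρ f) (hg : Continuous g)
    (hu : 0 < u) (x : E) : Integrable (fun y => g y * f (u • (x - y))) μ := by
  have hfc := hf.continuous
  refine Continuous.integrable_of_hasCompactSupport (by fun_prop)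
    (HasCompactSupport.intro (isCompact_closedBall x (ρ / u)) fun y hy => ?_)
  by_contra hne
  refine hy ?_
  rw [mem_closedBall, dist_comm, dist_eq_norm]
  exact hf.norm_sub_le hu (right_ne_zero_of_mul hne)

theorem MeanZeroBump.integral_mul_comp_eq_sub_const (hf : MeanZeroBump μ ρ f) (hg : Continuous g)
    (hu : 0 < u) (x : E) (c : ℝ) :
    ∫ y, g y * f (u • (x - y)) ∂μ = ∫ y, (g y - c) * f (u • (x - y)) ∂μ := by
  simp_rw [sub_mul]
  rw [integral_sub (hf.integrable_mul_comp hg hu x)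
      (hf.integrable_mul_comp continuous_const hu x), integral_const_mul,
    integral_comp_smul_sub f x hu, hf.integral_eq_zero, mul_zero, mul_zero, sub_zero]

theorem abs_weight_mul_slice_le [Nontrivial E] (hf : MeanZeroBump μ ρ f) (hL : ∀ v, |f v| ≤ L)
    (hg : HolderBound α M g) (hα : 0 ≤ α) (hu : 1 ≤ u) (x : E) (hS : MeasurableSet S) :
    |(1 + u) ^ (finrank ℝ E - 1) * ∫ y in S, (g y - g x) * f (u • (x - y)) ∂μ| ≤
      M * L * sliceConst μ α ρ * u ^ (-1 - α) := by
  have hL0 : 0 ≤ L := (abs_nonneg _).trans (hL 0)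
  refine abs_weight_mul_setIntegral_le hα hf.radius_nonneg (mul_nonneg hg.nonneg hL0) hu x hS
    (fun y => ?_) fun y hy => hf.norm_sub_le (by linarith) (right_ne_zero_of_mul hy)
  rw [abs_mul, mul_right_comm, abs_sub_comm]
  exact mul_le_mul (hg.abs_sub_le x y) (hL _) (abs_nonneg _)
    (mul_nonneg hg.nonneg (by positivity))

-- Both slices are tested against the same constant `g x`, so that the factor `|g y - g x|` is
-- available for their difference.
theorem MeanZeroBump.integral_mul_comp_sub (hf : MeanZeroBump μ ρ f) (hf' : MeanZeroBump μ ρ f')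
    (hg : Continuous g) (hu : 0 < u) (x x' : E) :
    ∫ y, g y * f (u • (x - y)) ∂μ - ∫ y, g y * f' (u • (x' - y)) ∂μ =
      ∫ y, (g y - g x) * (f (u • (x - y)) - f' (u • (x' - y))) ∂μ := by
  have hgsub : Continuous fun y => g y - g x := hg.sub continuous_const
  rw [hf.integral_mul_comp_eq_sub_const hg hu x (g x),
    hf'.integral_mul_comp_eq_sub_const hg hu x' (g x), ← integral_sub
      (hf.integrable_mul_comp hgsub hu x) (hf'.integrable_mul_comp hgsub hu x')]
  simp_rw [mul_sub]

theorem abs_weight_mul_slice_sub_slice_le [Nontrivial E] (hf : MeanZeroBump μ ρ f)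
    (hf' : MeanZeroBump μ ρ f') {x x' : E}
    (hL : ∀ v v', |f v - f' v'| ≤ L * (‖x - x'‖ + ‖v - v'‖)) (hL0 : 0 ≤ L)
    (hg : HolderBound α M g) (hα : 0 < α) (hu : 1 ≤ u) (hux : u * ‖x - x'‖ ≤ 1) :
    |(1 + u) ^ (finrank ℝ E - 1) *
        (∫ y, g y * f (u • (x - y)) ∂μ - ∫ y, g y * f' (u • (x' - y)) ∂μ)| ≤
      2 * M * L * sliceConst μ α (ρ + 1) * ‖x - x'‖ * u ^ (-α) := by
  have hu0 : 0 < u := by linarith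
  have hM := hg.nonneg
  have hρ := hf.radius_nonneg
  have hprofile (y : E) : |f (u • (x - y)) - f' (u • (x' - y))| ≤ L * (2 * u * ‖x - x'‖) := by
    have hshift : u • (x - y) - u • (x' - y) = u • (x - x') := by module
    refine (hL _ _).trans ?_
    rw [hshift, norm_smul, Real.norm_of_nonneg hu0.le]
    gcongr
    nlinarith [norm_nonneg (x - x')]
  have hsize (y : E) : |(g y - g x) * (f (u • (x - y)) - f' (u • (x' - y)))| ≤
      2 * M * L * ‖x - x'‖ * u * ‖x - y‖ ^ α := by
    calc _ ≤ M * ‖x - y‖ ^ α * (L * (2 * u * ‖x - x'‖)) := by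
          rw [abs_mul, abs_sub_comm (g y)]
          gcongr
          exacts [hg.abs_sub_le x y, hprofile y]
      _ = _ := by ring
  rw [hf.integral_mul_comp_sub hf' (hg.continuous hα) hu0, ← setIntegral_univ]
  refine (abs_weight_mul_setIntegral_le hα.le (by positivity) (by positivity) hu x
    MeasurableSet.univ hsize fun y hy =>
      hf.norm_sub_le_of_sub_ne_zero hf' hu0 hux (right_ne_zero_of_mul hy)).trans_eq ?_
  rw [Real.rpow_sub hu0, Real.rpow_neg_one, Real.rpow_neg hu0.le]
  field_simp

end Slices

section Tail

variable {E : Type*} [NormedAddCommGroup E] [MeasurableSpace E] {μ : Measure E}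
  {ρ r K K' : ℝ} {f f' : E → ℝ}

theorem MeanZeroBump.tailIntegral_eq_zero (hf : MeanZeroBump μ ρ f) (hr : ρ ≤ r) :
    tailIntegral μ f r = 0 :=
  setIntegral_eq_zero_of_forall_eq_zero fun v hv => by_contra fun hne =>
    (hf.norm_le_of_ne_zero v hne).not_gt (hr.trans_lt hv)

variable [NormedSpace ℝ E] [FiniteDimensional ℝ E] [BorelSpace E] [μ.IsAddHaarMeasure]

theorem MeanZeroBump.integrable (hf : MeanZeroBump μ ρ f) : Integrable f μ := by
  refine hf.continuous.integrable_of_hasCompactSupport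
    (HasCompactSupport.intro (isCompact_closedBall 0 ρ) fun v hv => by_contra fun hne => hv ?_)
  simpa using hf.norm_le_of_ne_zero v hne

theorem MeanZeroBump.sub (hf : MeanZeroBump μ ρ f) (hf' : MeanZeroBump μ ρ f') :
    MeanZeroBump μ ρ fun v => f v - f' v where
  radius_nonneg := hf.radius_nonneg
  continuous := hf.continuous.sub hf'.continuous
  norm_le_of_ne_zero v hv := by
    by_cases hfv : f v = 0
    · exact hf'.norm_le_of_ne_zero v fun hf'v => hv (by rw [hfv, hf'v, sub_zero])
    · exact hf.norm_le_of_ne_zero v hfv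
  integral_eq_zero := by
    rw [integral_sub hf.integrable hf'.integrable, hf.integral_eq_zero, hf'.integral_eq_zero,
      sub_zero]

theorem MeanZeroBump.abs_tailIntegral_le (hf : MeanZeroBump μ ρ f) (hK : ∀ v, |f v| ≤ K)
    (hr : 0 ≤ r) : |tailIntegral μ f r| ≤ K * (r ^ finrank ℝ E * μ.real (ball 0 1)) := by
  have hcompl : {v : E | r < ‖v‖} = (closedBall 0 r)ᶜ := by ext; simp
  rw [tailIntegral, hcompl, setIntegral_compl measurableSet_closedBall hf.integrable,
    hf.integral_eq_zero, zero_sub, abs_neg, ← Measure.addHaar_real_closedBall μ 0 hr,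
    ← Real.norm_eq_abs]
  exact norm_setIntegral_le_of_norm_le_const measure_closedBall_lt_top fun v _ => hK v

theorem MeanZeroBump.abs_tailIntegral_div_le [Nontrivial E] (hf : MeanZeroBump μ ρ f)
    (hK : ∀ v, |f v| ≤ K) (hr : 0 < r) : |tailIntegral μ f r / r| ≤
      (Ioc 0 ρ).indicator (fun _ => K * (ρ ^ (finrank ℝ E - 1) * μ.real (ball 0 1))) r := by
  have hK0 : 0 ≤ K := (abs_nonneg _).trans (hK 0)
  rcases le_or_gt r ρ with hle | hgt
  · rw [indicator_of_mem (mem_Ioc.2 ⟨hr, hle⟩), abs_div, abs_of_pos hr, div_le_iff₀ hr]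
    obtain ⟨k, hk⟩ := Nat.exists_eq_add_one.2 (finrank_pos (R := ℝ) (M := E))
    calc |tailIntegral μ f r| ≤ K * (r ^ finrank ℝ E * μ.real (ball 0 1)) :=
          hf.abs_tailIntegral_le hK hr.le
      _ = K * (r ^ (finrank ℝ E - 1) * μ.real (ball 0 1)) * r := by
          rw [hk, Nat.add_sub_cancel, pow_succ]
          ring
      _ ≤ K * (ρ ^ (finrank ℝ E - 1) * μ.real (ball 0 1)) * r := by gcongr
  · have hρ := hf.radius_nonneg
    rw [hf.tailIntegral_eq_zero hgt.le, zero_div, abs_zero]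
    exact indicator_nonneg (fun _ _ => by positivity) r

theorem stronglyMeasurable_tailIntegral (hf : Continuous f) :
    StronglyMeasurable (tailIntegral μ f) := by
  have hind : StronglyMeasurable
      ({p : ℝ × E | p.1 < ‖p.2‖}.indicator fun p => f p.2) :=
    (hf.comp continuous_snd).stronglyMeasurable.indicator
      (measurableSet_lt measurable_fst measurable_snd.norm)
  have heq : tailIntegral μ f = fun r => ∫ v, {p : ℝ × E | p.1 < ‖p.2‖}.indicator
      (fun p => f p.2) (r, v) ∂μ :=
    funext fun r => (integral_indicator (measurableSet_lt_norm r)).symm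
  rw [heq]
  exact hind.integral_prod_right'

theorem MeanZeroBump.integrableOn_tailIntegral_div [Nontrivial E] (hf : MeanZeroBump μ ρ f)
    (hK : ∀ v, |f v| ≤ K) : IntegrableOn (fun r => tailIntegral μ f r / r) (Ioi 0) := by
  refine Integrable.mono' (IntegrableOn.integrable_indicator ?_ measurableSet_Ioc).integrableOn
    ((stronglyMeasurable_tailIntegral hf.continuous).measurable.div
      measurable_id).aestronglyMeasurable
    (ae_restrict_of_forall_mem measurableSet_Ioi fun r hr => hf.abs_tailIntegral_div_le hK hr)
  exact integrableOn_const measure_Ioc_lt_top.ne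

/-- The logarithmic moment `∫ f(v) log ‖v‖ dv` of a bump `f` of integral zero, in the layer-cake
form that avoids the logarithm. -/
noncomputable def logMoment (μ : Measure E) (f : E → ℝ) : ℝ :=
  ∫ r in Ioi 0, tailIntegral μ f r / r

theorem MeanZeroBump.abs_logMoment_le [Nontrivial E] (hf : MeanZeroBump μ ρ f)
    (hK : ∀ v, |f v| ≤ K) :
    |logMoment μ f| ≤ K * (ρ ^ (finrank ℝ E - 1) * μ.real (ball 0 1)) * ρ := by
  refine (abs_setIntegral_le_of_abs_le measurableSet_Ioi
    (IntegrableOn.integrable_indicator ?_ measurableSet_Ioc).integrableOn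
    fun r hr => hf.abs_tailIntegral_div_le hK hr).trans_eq ?_
  · exact integrableOn_const measure_Ioc_lt_top.ne
  · rw [setIntegral_indicator measurableSet_Ioc, inter_eq_self_of_subset_right Ioc_subset_Ioi_self,
      setIntegral_const, Real.volume_real_Ioc_of_le hf.radius_nonneg, smul_eq_mul, sub_zero,
      mul_comm]

theorem MeanZeroBump.logMoment_sub [Nontrivial E] (hf : MeanZeroBump μ ρ f)
    (hf' : MeanZeroBump μ ρ f') (hK : ∀ v, |f v| ≤ K) (hK' : ∀ v, |f' v| ≤ K') :
    logMoment μ (fun v => f v - f' v) = logMoment μ f - logMoment μ f' := by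
  have htail (r : ℝ) :
      tailIntegral μ (fun v => f v - f' v) r = tailIntegral μ f r - tailIntegral μ f' r :=
    integral_sub hf.integrable.integrableOn hf'.integrable.integrableOn
  simp only [logMoment, htail, sub_div]
  exact integral_sub (hf.integrableOn_tailIntegral_div hK) (hf'.integrableOn_tailIntegral_div hK')

end Tail

section DilationKernel

theorem integral_Ioi_one_weight_mul_comp (k : ℕ) (h : ℝ → ℝ) {ε : ℝ} (hε : 0 < ε) :
    ∫ u in Ioi 1, (1 + u) ^ k * ((u ^ (k + 1))⁻¹ * h (u * ε)) =
      ∫ r in Ioi ε, ((ε + r) / r) ^ k * (h r / r) := by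
  have hscale := integral_comp_mul_right_Ioi (fun r => ((ε + r) / r) ^ k * (h r / r)) 1 hε
  rw [one_mul, smul_eq_mul, eq_inv_mul_iff_mul_eq₀ hε.ne', ← integral_const_mul] at hscale
  rw [← hscale]
  refine setIntegral_congr_fun measurableSet_Ioi fun u hu => ?_
  have hu0 : 0 < u := one_pos.trans hu
  have hratio : (ε + u * ε) / (u * ε) = (1 + u) / u := by field_simp
  simp only [hratio, div_pow]
  field_simp
  ring

theorem abs_integral_Ioc_weight_mul_le (k : ℕ) {K : ℝ} {h : ℝ → ℝ}
    (hK : ∀ u ∈ Ioc 0 1, |h u| ≤ K) : |∫ u in Ioc 0 1, (1 + u) ^ k * h u| ≤ 2 ^ k * K := by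
  have hconst := norm_setIntegral_le_of_norm_le_const (μ := volume) (s := Ioc (0 : ℝ) 1)
    (f := fun u => (1 + u) ^ k * h u) (C := 2 ^ k * K) measure_Ioc_lt_top fun u hu => by
      have hu0 := hu.1
      rw [norm_mul, norm_pow, Real.norm_of_nonneg (by linarith)]
      gcongr
      exacts [by linarith [hu.2], hK u hu]
  simpa using hconst

variable {E : Type*} [NormedAddCommGroup E] [NormedSpace ℝ E] {ρ δ K : ℝ} {f f' g : E → ℝ}

/-- The kernel obtained by superposing the dilates `v ↦ f (u • v)` over the scales `u ∈ S`. With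
`s = 1 / (1 + u)`, the kernel `H` of the theorem is `χ(y)` times such a kernel with
`S = (0, ∞)`. -/
noncomputable def dilationKernel (f : E → ℝ) (S : Set ℝ) (w : E) : ℝ :=
  ∫ u in S, (1 + u) ^ (finrank ℝ E - 1) * f (u • w)

theorem abs_dilationKernel_Ioc_le (hK : ∀ v, |f v| ≤ K) (w : E) :
    |dilationKernel f (Ioc 0 1) w| ≤ 2 ^ (finrank ℝ E - 1) * K :=
  abs_integral_Ioc_weight_mul_le _ fun _ _ => hK _

theorem abs_dilationKernel_Ioc_sub_le (hf : Continuous f) (hf' : Continuous f') {w w' : E}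
    (hδ : ∀ u ∈ Ioc (0 : ℝ) 1, |f (u • w) - f' (u • w')| ≤ δ) :
    |dilationKernel f (Ioc 0 1) w - dilationKernel f' (Ioc 0 1) w'| ≤
      2 ^ (finrank ℝ E - 1) * δ := by
  have hint {h : E → ℝ} (hh : Continuous h) (z : E) :
      IntegrableOn (fun u : ℝ => (1 + u) ^ (finrank ℝ E - 1) * h (u • z)) (Ioc 0 1) :=
    Continuous.integrableOn_Ioc (by fun_prop)
  rw [dilationKernel, dilationKernel, ← integral_sub (hint hf w) (hint hf' w')]
  simp_rw [← mul_sub]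
  exact abs_integral_Ioc_weight_mul_le _ hδ

variable [MeasurableSpace E] {μ : Measure E}

theorem MeanZeroBump.integrableOn_weight_mul_dilation (hf : MeanZeroBump μ ρ f) {w : E}
    (hw : w ≠ 0) :
    IntegrableOn (fun u : ℝ => (1 + u) ^ (finrank ℝ E - 1) * f (u • w)) (Ioi 0) := by
  have hfc := hf.continuous
  have hcont : Continuous fun u : ℝ => (1 + u) ^ (finrank ℝ E - 1) * f (u • w) := by fun_prop
  refine (hcont.continuousOn.integrableOn_compact
    (isCompact_Icc (a := 0) (b := ρ / ‖w‖))).of_forall_sdiff_eq_zero measurableSet_Ioi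
    fun u ⟨hu, hnotMem⟩ => by_contra fun hne => hnotMem ⟨le_of_lt hu, ?_⟩
  have hnorm := hf.norm_le_of_ne_zero _ (right_ne_zero_of_mul hne)
  rw [norm_smul, Real.norm_of_nonneg (le_of_lt hu)] at hnorm
  exact (le_div_iff₀ (norm_pos_iff.2 hw)).2 hnorm

theorem MeanZeroBump.dilationKernel_Ioi_zero (hf : MeanZeroBump μ ρ f) {w : E} (hw : w ≠ 0) :
    dilationKernel f (Ioi 0) w = dilationKernel f (Ioc 0 1) w + dilationKernel f (Ioi 1) w := by
  have hint := hf.integrableOn_weight_mul_dilation hw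
  rw [dilationKernel, ← Ioc_union_Ioi_eq_Ioi zero_le_one,
    setIntegral_union (Ioc_disjoint_Ioi le_rfl) measurableSet_Ioi
      (hint.mono_set Ioc_subset_Ioi_self) (hint.mono_set (Ioi_subset_Ioi zero_le_one))]
  rfl

theorem integrable_mul_dilationKernel_Ioc [BorelSpace E] (hf : Continuous f) (hK : ∀ v, |f v| ≤ K)
    (hg : Integrable g μ) (x : E) :
    Integrable (fun y => g y * dilationKernel f (Ioc 0 1) (x - y)) μ := by
  have hcont : Continuous fun p : E × ℝ =>
      (1 + p.2) ^ (finrank ℝ E - 1) * f (p.2 • (x - p.1)) := by fun_prop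
  exact hg.mul_bdd hcont.stronglyMeasurable.integral_prod_right'.aestronglyMeasurable
    (ae_of_all _ fun y => abs_dilationKernel_Ioc_le hK (x - y))

end DilationKernel

section PrincipalValue

variable {E : Type*} [NormedAddCommGroup E] [NormedSpace ℝ E] [FiniteDimensional ℝ E]
  [MeasurableSpace E] [BorelSpace E] {μ : Measure E} [μ.IsAddHaarMeasure]
  {α ρ ε K M : ℝ} {f g F : E → ℝ}

/-- The action on `g` of the scales `u > 1` of `dilationKernel f`, with the integral over `y`
taken before that over the scales; it converges absolutely in this order only. -/
noncomputable def farIntegral (μ : Measure E) (f g : E → ℝ) (x : E) : ℝ :=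
  ∫ u in Ioi 1, (1 + u) ^ (finrank ℝ E - 1) * ∫ y, g y * f (u • (x - y)) ∂μ

theorem tendsto_setIntegral_lt_norm_sub [Nontrivial E] (hF : Integrable F μ) (x : E) :
    Tendsto (fun ε => ∫ y in {y | ε < ‖x - y‖}, F y ∂μ) (𝓝[>] 0) (𝓝 (∫ y, F y ∂μ)) := by
  simp_rw [← integral_indicator (measurableSet_lt_norm_sub x _)]
  refine tendsto_integral_filter_of_dominated_convergence (fun y => ‖F y‖)
    (Eventually.of_forall fun ε =>
      hF.aestronglyMeasurable.indicator (measurableSet_lt_norm_sub x ε))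
    (Eventually.of_forall fun ε => ae_of_all _ fun y => norm_indicator_le_norm_self _ _)
    hF.norm ?_
  filter_upwards [Measure.ae_ne μ x] with y hy
  refine tendsto_const_nhds.congr' ?_
  filter_upwards [nhdsWithin_le_nhds (Iio_mem_nhds (norm_sub_pos_iff.2 hy.symm))] with ε hε
  exact (indicator_of_mem (s := {y | ε < ‖x - y‖}) hε F).symm

theorem stronglyMeasurable_weight_mul_slice {ν : Measure E} [SFinite ν] (hf : Continuous f)
    (hg : Continuous g) (x : E) : StronglyMeasurable fun u : ℝ =>
      (1 + u) ^ (finrank ℝ E - 1) * ∫ y, g y * f (u • (x - y)) ∂ν := by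
  have hweight : Continuous fun u : ℝ => (1 + u) ^ (finrank ℝ E - 1) := by fun_prop
  have hslice : Continuous fun p : ℝ × E => g p.2 * f (p.1 • (x - p.2)) := by fun_prop
  exact hweight.stronglyMeasurable.mul hslice.stronglyMeasurable.integral_prod_right'

theorem integrableOn_weight_mul_slice [Nontrivial E] {S : Set E} (hf : MeanZeroBump μ ρ f)
    (hK : ∀ v, |f v| ≤ K) (hα : 0 < α) (hg : HolderBound α M g) (x : E) (hS : MeasurableSet S) :
    IntegrableOn (fun u : ℝ => (1 + u) ^ (finrank ℝ E - 1) *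
      ∫ y in S, (g y - g x) * f (u • (x - y)) ∂μ) (Ioi 1) :=
  ((integrableOn_Ioi_rpow_neg_one_sub hα one_pos).const_mul _).mono'
    (stronglyMeasurable_weight_mul_slice hf.continuous
      ((hg.continuous hα).sub continuous_const) x).aestronglyMeasurable
    (ae_restrict_of_forall_mem measurableSet_Ioi fun _ hu =>
      abs_weight_mul_slice_le hf hK hg hα.le (le_of_lt hu) x hS)

theorem tendsto_setIntegral_weight_mul_slice [Nontrivial E] (hf : MeanZeroBump μ ρ f)
    (hK : ∀ v, |f v| ≤ K) (hα : 0 < α) (hg : HolderBound α M g) (x : E) :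
    Tendsto (fun ε => ∫ u in Ioi 1, (1 + u) ^ (finrank ℝ E - 1) *
        ∫ y in {y | ε < ‖x - y‖}, (g y - g x) * f (u • (x - y)) ∂μ)
      (𝓝[>] 0) (𝓝 (farIntegral μ f g x)) := by
  have hgsub : Continuous fun y => g y - g x := (hg.continuous hα).sub continuous_const
  refine tendsto_integral_filter_of_dominated_convergence _
    (Eventually.of_forall fun ε =>
      (stronglyMeasurable_weight_mul_slice hf.continuous hgsub x).aestronglyMeasurable)
    (Eventually.of_forall fun ε => ae_restrict_of_forall_mem measurableSet_Ioi fun u hu =>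
      abs_weight_mul_slice_le hf hK hg hα.le (le_of_lt hu) x (measurableSet_lt_norm_sub x ε))
    ((integrableOn_Ioi_rpow_neg_one_sub hα one_pos).const_mul _)
    (ae_restrict_of_forall_mem measurableSet_Ioi fun u hu => ?_)
  have hu0 : 0 < u := one_pos.trans hu
  rw [hf.integral_mul_comp_eq_sub_const (hg.continuous hα) hu0 x (g x)]
  exact (tendsto_setIntegral_lt_norm_sub (hf.integrable_mul_comp hgsub hu0 x) x).const_mul _

theorem MeanZeroBump.tendsto_integral_weight_mul_tailIntegral [Nontrivial E]
    (hf : MeanZeroBump μ ρ f) (hK : ∀ v, |f v| ≤ K) :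
    Tendsto (fun ε => ∫ u in Ioi 1, (1 + u) ^ (finrank ℝ E - 1) *
        ((u ^ finrank ℝ E)⁻¹ * tailIntegral μ f (u * ε))) (𝓝[>] 0) (𝓝 (logMoment μ f)) := by
  obtain ⟨k, hk⟩ := Nat.exists_eq_add_one.2 (finrank_pos (R := ℝ) (M := E))
  rw [hk, Nat.add_sub_cancel]
  suffices h : Tendsto (fun ε => ∫ r in Ioi 0, (Ioi ε).indicator
      (fun r => ((ε + r) / r) ^ k * (tailIntegral μ f r / r)) r)
      (𝓝[>] 0) (𝓝 (logMoment μ f)) by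
    refine h.congr' ?_
    filter_upwards [self_mem_nhdsWithin] with ε hε
    rw [integral_Ioi_one_weight_mul_comp k _ hε, setIntegral_indicator measurableSet_Ioi,
      inter_eq_self_of_subset_right (Ioi_subset_Ioi (le_of_lt hε))]
  have htail := (stronglyMeasurable_tailIntegral (μ := μ) hf.continuous).measurable
  refine tendsto_integral_filter_of_dominated_convergence _
    (Eventually.of_forall fun ε =>
      (Measurable.indicator (by fun_prop) measurableSet_Ioi).aestronglyMeasurable)
    ?_ ((hf.integrableOn_tailIntegral_div hK).norm.const_mul (2 ^ k))
    (ae_restrict_of_forall_mem measurableSet_Ioi fun r (hr : 0 < r) => ?_)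
  · filter_upwards [self_mem_nhdsWithin] with ε (hε : 0 < ε)
    refine ae_restrict_of_forall_mem measurableSet_Ioi fun r (hr : 0 < r) => ?_
    by_cases hεr : ε < r
    · rw [indicator_of_mem (mem_Ioi.2 hεr), norm_mul, norm_pow, Real.norm_of_nonneg (by positivity)]
      gcongr
      rw [div_le_iff₀ hr]
      linarith
    · rw [indicator_of_notMem (by simpa using hεr), norm_zero]
      positivity
  · have hcont : Continuous fun ε : ℝ =>
        ((ε + r) / r) ^ k * (tailIntegral μ f r / r) := by fun_prop
    have hlim := (hcont.tendsto 0).mono_left (nhdsWithin_le_nhds (s := Ioi (0 : ℝ)))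
    rw [zero_add, div_self hr.ne', one_pow, one_mul] at hlim
    refine hlim.congr' ?_
    filter_upwards [nhdsWithin_le_nhds (Iio_mem_nhds hr)] with ε (hε : ε < r)
    rw [indicator_of_mem (mem_Ioi.2 hε)]

theorem MeanZeroBump.integrable_prod_truncated (hf : MeanZeroBump μ ρ f) (hg : Continuous g)
    (hε : 0 < ε) (x : E) :
    Integrable (fun p : E × ℝ => g p.1 * ((1 + p.2) ^ (finrank ℝ E - 1) * f (p.2 • (x - p.1))))
      ((μ.restrict {y | ε < ‖x - y‖}).prod (volume.restrict (Ioi 1))) := by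
  have hfc := hf.continuous
  have hcont : Continuous fun p : E × ℝ =>
      g p.1 * ((1 + p.2) ^ (finrank ℝ E - 1) * f (p.2 • (x - p.1))) := by fun_prop
  rw [Measure.prod_restrict]
  refine (hcont.continuousOn.integrableOn_compact ((isCompact_closedBall x ρ).prod
    (isCompact_Icc (a := 1) (b := ρ / ε)))).of_forall_sdiff_eq_zero
    ((measurableSet_lt_norm_sub x ε).prod measurableSet_Ioi) ?_
  rintro ⟨y, u⟩ ⟨⟨hy : ε < ‖x - y‖, hu : 1 < u⟩, hnotMem⟩
  by_contra hne
  have hxy := (le_div_iff₀' (one_pos.trans hu)).1 <| hf.norm_sub_le (one_pos.trans hu)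
    (right_ne_zero_of_mul (right_ne_zero_of_mul hne))
  refine hnotMem ⟨?_, hu.le, ?_⟩
  · rw [mem_closedBall, dist_comm, dist_eq_norm]
    nlinarith [norm_nonneg (x - y)]
  · rw [le_div_iff₀ hε]
    nlinarith

-- Since `∫ f = 0`, subtracting `g x` from `g y` changes the slice only through the truncation;
-- what is left over involves no values of `g` other than `g x`.
theorem MeanZeroBump.setIntegral_mul_dilationKernel_Ioi_one [Nontrivial E]
    (hf : MeanZeroBump μ ρ f) (hK : ∀ v, |f v| ≤ K) (hα : 0 < α) (hg : HolderBound α M g)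
    (hε : 0 < ε) (x : E) :
    ∫ y in {y | ε < ‖x - y‖}, g y * dilationKernel f (Ioi 1) (x - y) ∂μ =
      (∫ u in Ioi 1, (1 + u) ^ (finrank ℝ E - 1) *
        ∫ y in {y | ε < ‖x - y‖}, (g y - g x) * f (u • (x - y)) ∂μ) +
      g x * ∫ u in Ioi 1, (1 + u) ^ (finrank ℝ E - 1) *
        ((u ^ finrank ℝ E)⁻¹ * tailIntegral μ f (u * ε)) := by
  have hgc := hg.continuous hα
  have hprod := hf.integrable_prod_truncated hgc hε x
  have hfar := integrableOn_weight_mul_slice hf hK hα hg x (measurableSet_lt_norm_sub x ε)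
  have hslice (u : ℝ) (hu : u ∈ Ioi 1) :
      (∫ y in {y | ε < ‖x - y‖}, g y * ((1 + u) ^ (finrank ℝ E - 1) * f (u • (x - y))) ∂μ) -
        (1 + u) ^ (finrank ℝ E - 1) *
          ∫ y in {y | ε < ‖x - y‖}, (g y - g x) * f (u • (x - y)) ∂μ =
      g x * ((1 + u) ^ (finrank ℝ E - 1) *
        ((u ^ finrank ℝ E)⁻¹ * tailIntegral μ f (u * ε))) := by
    have hu0 : 0 < u := one_pos.trans hu
    simp_rw [mul_left_comm (g _), sub_mul]
    rw [integral_sub (hf.integrable_mul_comp hgc hu0 x).integrableOn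
      (hf.integrable_mul_comp continuous_const hu0 x).integrableOn, integral_const_mul,
      integral_const_mul, setIntegral_comp_smul_sub f x hu0 ε]
    ring
  calc _ = ∫ u in Ioi 1, ∫ y in {y | ε < ‖x - y‖},
        g y * ((1 + u) ^ (finrank ℝ E - 1) * f (u • (x - y))) ∂μ := by
        simp_rw [dilationKernel, ← integral_const_mul]
        exact integral_integral_swap hprod
    _ = _ := by
        rw [← integral_const_mul (g x), ← setIntegral_congr_fun measurableSet_Ioi hslice,
          integral_sub hprod.integral_prod_right hfar, add_sub_cancel]

theorem MeanZeroBump.tendsto_setIntegral_mul_dilationKernel_Ioi_one [Nontrivial E]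
    (hf : MeanZeroBump μ ρ f) (hK : ∀ v, |f v| ≤ K) (hα : 0 < α) (hg : HolderBound α M g)
    (x : E) :
    Tendsto (fun ε => ∫ y in {y | ε < ‖x - y‖}, g y * dilationKernel f (Ioi 1) (x - y) ∂μ)
      (𝓝[>] 0) (𝓝 (farIntegral μ f g x + g x * logMoment μ f)) := by
  refine ((tendsto_setIntegral_weight_mul_slice hf hK hα hg x).add
    ((hf.tendsto_integral_weight_mul_tailIntegral hK).const_mul (g x))).congr' ?_
  filter_upwards [self_mem_nhdsWithin] with ε hε
  exact (hf.setIntegral_mul_dilationKernel_Ioi_one hK hα hg hε x).symm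

/-- The limit, as `ε → 0`, of the integral of `g(y) dilationKernel f (0,∞) (x - y)` over
`ε < ‖x - y‖`: the scales `u ≤ 1` and `u > 1` separately, and the trace `g(x) logMoment f` left by
the truncation. -/
noncomputable def dilationPV (μ : Measure E) (f g : E → ℝ) (x : E) : ℝ :=
  (∫ y, g y * dilationKernel f (Ioc 0 1) (x - y) ∂μ) +
    (farIntegral μ f g x + g x * logMoment μ f)

theorem MeanZeroBump.tendsto_dilationPV [Nontrivial E] (hf : MeanZeroBump μ ρ f)
    (hK : ∀ v, |f v| ≤ K) (hα : 0 < α) (hg : HolderBound α M g) (hgi : Integrable g μ) (x : E) :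
    Tendsto (fun ε => ∫ y in {y | ε < ‖x - y‖}, g y * dilationKernel f (Ioi 0) (x - y) ∂μ)
      (𝓝[>] 0) (𝓝 (dilationPV μ f g x)) := by
  have hnear := integrable_mul_dilationKernel_Ioc hf.continuous hK hgi x
  refine ((tendsto_setIntegral_lt_norm_sub hnear x).add
    (hf.tendsto_setIntegral_mul_dilationKernel_Ioi_one hK hα hg x)).congr' ?_
  filter_upwards [self_mem_nhdsWithin] with ε (hε : 0 < ε)
  have hfar : IntegrableOn (fun y => g y * dilationKernel f (Ioi 1) (x - y))
      {y | ε < ‖x - y‖} μ := by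
    simp_rw [dilationKernel, ← integral_const_mul]
    exact (hf.integrable_prod_truncated (hg.continuous hα) hε x).integral_prod_left
  rw [← integral_add hnear.integrableOn hfar]
  refine setIntegral_congr_fun (measurableSet_lt_norm_sub x ε) fun y (hy : ε < ‖x - y‖) => ?_
  simp only [hf.dilationKernel_Ioi_zero (norm_pos_iff.1 (hε.trans hy)), mul_add]

end PrincipalValue

section Profile

variable {E : Type*} [NormedAddCommGroup E] [MeasurableSpace E]

/-- A family of bumps `φ x` of integral zero, jointly bounded and Lipschitz with constant `L`: the
coefficients of a singular kernel `(x, y) ↦ dilationKernel (φ x) (0, ∞) (x - y)`. -/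
structure MeanZeroProfile (μ : Measure E) (ρ L : ℝ) (φ : E → E → ℝ) : Prop where
  bump : ∀ x, MeanZeroBump μ ρ (φ x)
  abs_le : ∀ x v, |φ x v| ≤ L
  abs_sub_le : ∀ x x' v v', |φ x v - φ x' v'| ≤ L * (‖x - x'‖ + ‖v - v'‖)

variable {μ : Measure E} {α ρ L M : ℝ} {φ : E → E → ℝ} {g : E → ℝ}

theorem MeanZeroProfile.nonneg (hφ : MeanZeroProfile μ ρ L φ) : 0 ≤ L :=
  (abs_nonneg _).trans (hφ.abs_le 0 0)

variable [NormedSpace ℝ E]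

theorem MeanZeroProfile.holderBound_dilationKernel_Ioc (hφ : MeanZeroProfile μ ρ L φ) (y : E) :
    HolderBound 1 (2 ^ (finrank ℝ E - 1) * (2 * L))
      fun x => dilationKernel (φ x) (Ioc 0 1) (x - y) where
  abs_le x := abs_dilationKernel_Ioc_le
    (fun v => (hφ.abs_le x v).trans (by linarith [hφ.nonneg])) _
  abs_sub_le x x' := by
    rw [Real.rpow_one, mul_assoc]
    refine abs_dilationKernel_Ioc_sub_le (hφ.bump x).continuous (hφ.bump x').continuous
      fun u hu => (hφ.abs_sub_le _ _ _ _).trans ?_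
    rw [← smul_sub, sub_sub_sub_cancel_right, norm_smul, Real.norm_of_nonneg hu.1.le]
    nlinarith [mul_le_of_le_one_left (norm_nonneg (x - x')) hu.2, hφ.nonneg]

variable [FiniteDimensional ℝ E] [BorelSpace E] [μ.IsAddHaarMeasure] [Nontrivial E]

theorem MeanZeroProfile.holderBound_farIntegral (hφ : MeanZeroProfile μ ρ L φ) (hα0 : 0 < α)
    (hα1 : α < 1) (hg : HolderBound α M g) :
    HolderBound α (2 * (2 * M * L * sliceConst μ α (ρ + 1) / (1 - α) +
      2 * (M * L * sliceConst μ α ρ) / α)) fun x => farIntegral μ (φ x) g x := by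
  have hM := hg.nonneg
  have hL := hφ.nonneg
  have hgc := hg.continuous hα0
  have hdiff : 0 ≤ sliceConst μ α (ρ + 1) :=
    sliceConst_nonneg (by linarith [(hφ.bump 0).radius_nonneg])
  refine holderBound_integral_scales hα0 hα1 (by positivity)
    (fun x => (stronglyMeasurable_weight_mul_slice
      (hφ.bump x).continuous hgc x).aestronglyMeasurable)
    (fun x u (hu : 1 < u) => ?_) fun x x' u (hu : 1 < u) hux => ?_
  · rw [(hφ.bump x).integral_mul_comp_eq_sub_const hgc (one_pos.trans hu) x (g x),
      ← setIntegral_univ]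
    exact abs_weight_mul_slice_le (hφ.bump x) (hφ.abs_le x) hg hα0.le hu.le x .univ
  · rw [← mul_sub]
    exact abs_weight_mul_slice_sub_slice_le (hφ.bump x) (hφ.bump x') (hφ.abs_sub_le x x') hL hg
      hα0 hu.le hux

theorem MeanZeroProfile.holderBound_logMoment (hφ : MeanZeroProfile μ ρ L φ) :
    HolderBound 1 (L * (ρ ^ (finrank ℝ E - 1) * μ.real (ball 0 1)) * ρ)
      fun x => logMoment μ (φ x) where
  abs_le x := (hφ.bump x).abs_logMoment_le (hφ.abs_le x)
  abs_sub_le x x' := by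
    rw [← (hφ.bump x).logMoment_sub (hφ.bump x') (hφ.abs_le x) (hφ.abs_le x'), Real.rpow_one]
    refine (((hφ.bump x).sub (hφ.bump x')).abs_logMoment_le (K := L * ‖x - x'‖)
      fun v => ?_).trans_eq (by ring)
    simpa using hφ.abs_sub_le x x' v v

theorem MeanZeroProfile.exists_holderBound_dilationPV (hφ : MeanZeroProfile μ ρ L φ)
    (hα0 : 0 < α) (hα1 : α < 1) :
    ∃ C, 0 ≤ C ∧ ∀ (g : E → ℝ) (M : ℝ), HolderBound α M g → Integrable g μ →
      HolderBound α (C * (M + ∫ y, |g y| ∂μ)) fun x => dilationPV μ (φ x) g x := by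
  have hρ := (hφ.bump 0).radius_nonneg
  have hL := hφ.nonneg
  have hsize : 0 ≤ sliceConst μ α ρ := sliceConst_nonneg hρ
  have hdiff : 0 ≤ sliceConst μ α (ρ + 1) := sliceConst_nonneg (by positivity)
  set near := 2 * (2 ^ (finrank ℝ E - 1) * (2 * L)) with hnear
  set far := 2 * (2 * L * sliceConst μ α (ρ + 1) / (1 - α) + 2 * (L * sliceConst μ α ρ) / α)
    with hfar
  set trace := 4 * (L * (ρ ^ (finrank ℝ E - 1) * μ.real (ball 0 1)) * ρ) with htrace
  have hnear0 : 0 ≤ near := by positivity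
  have hfar0 : 0 ≤ far := by positivity
  have htrace0 : 0 ≤ trace := by positivity
  refine ⟨near + far + trace, by positivity, fun g M hg hgi => ?_⟩
  have hM := hg.nonneg
  have hI : 0 ≤ ∫ y, |g y| ∂μ := by positivity
  have hnearBound := (holderBound_integral_mul hgi hφ.holderBound_dilationKernel_Ioc fun x =>
    integrable_mul_dilationKernel_Ioc (hφ.bump x).continuous (hφ.abs_le x) hgi x).of_exponent_le
      hα0.le hα1.le
  refine (hnearBound.add ((hφ.holderBound_farIntegral hα0 hα1 hg).add
    (hg.mul (hφ.holderBound_logMoment.of_exponent_le hα0.le hα1.le)))).mono ?_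
  calc _ = near * (∫ y, |g y| ∂μ) + (far + trace) * M := by rw [hnear, hfar, htrace]; ring
    _ ≤ (near + far + trace) * (M + ∫ y, |g y| ∂μ) := by nlinarith

end Profile

section SingularKernel

theorem integral_Ioo_zero_one_eq_integral_Ioi_zero (h : ℝ → ℝ) :
    ∫ s in Ioo 0 1, h s = ∫ u in Ioi 0, ((1 + u) ^ 2)⁻¹ * h (1 + u)⁻¹ := by
  have himage : (fun u : ℝ => (1 + u)⁻¹) '' Ioi 0 = Ioo 0 1 := by
    ext s
    simp only [mem_image, mem_Ioi, mem_Ioo]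
    constructor
    · rintro ⟨u, hu, rfl⟩
      exact ⟨by positivity, inv_lt_one_of_one_lt₀ (by linarith)⟩
    · rintro ⟨hs0, hs1⟩
      exact ⟨s⁻¹ - 1, sub_pos.2 ((one_lt_inv₀ hs0).2 hs1), by rw [add_sub_cancel, inv_inv]⟩
  rw [← himage, integral_image_eq_integral_abs_deriv_smul measurableSet_Ioi
    (f' := fun u => -((1 + u) ^ 2)⁻¹)]
  · refine setIntegral_congr_fun measurableSet_Ioi fun u _ => ?_
    simp only [abs_neg, abs_inv, abs_sq, smul_eq_mul]
  · intro u (hu : 0 < u)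
    simpa [neg_div] using (((hasDerivAt_id u).const_add 1).fun_inv
      (by positivity)).hasDerivWithinAt
  · exact fun u _ v _ huv => add_left_cancel (inv_injective huv)

variable {E : Type*} [NormedAddCommGroup E] {R R' X P : ℝ} {χ ψ : E → ℝ}

theorem exists_norm_le_of_hasCompactSupport (hχ : HasCompactSupport χ) :
    ∃ R, 0 ≤ R ∧ ∀ x, χ x ≠ 0 → ‖x‖ ≤ R := by
  obtain ⟨R, hR, hsub⟩ := hχ.isCompact.isBounded.subset_closedBall_lt 0 0
  exact ⟨R, hR.le, fun x hx => by simpa using hsub (subset_tsupport _ hx)⟩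

theorem meanZeroProfile_mul_comp_add [MeasurableSpace E] [BorelSpace E] {μ : Measure E}
    [μ.IsAddHaarMeasure] (hχ : HolderBound 1 X χ) (hψ : HolderBound 1 P ψ)
    (hR : 0 ≤ R) (hR' : 0 ≤ R') (hχR : ∀ x, χ x ≠ 0 → ‖x‖ ≤ R)
    (hψR : ∀ x, ψ x ≠ 0 → ‖x‖ ≤ R') (hψint : ∫ v, ψ v ∂μ = 0) :
    MeanZeroProfile μ (R' + R) (2 * X * P) fun x v => χ x * ψ (x + v) where
  bump x :=
    { radius_nonneg := by positivity
      continuous := continuous_const.mul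
        ((hψ.continuous one_pos).comp (continuous_const.add continuous_id))
      norm_le_of_ne_zero := fun v hv => by
        have hx := hχR x (left_ne_zero_of_mul hv)
        have hxv := hψR (x + v) (right_ne_zero_of_mul hv)
        linarith [norm_sub_le (x + v) x, congrArg norm (add_sub_cancel_left x v)]
      integral_eq_zero := by
        rw [integral_const_mul, integral_add_left_eq_self ψ x, hψint, mul_zero] }
  abs_le x v := by
    have hX := hχ.nonneg
    have hP := hψ.nonneg
    rw [abs_mul]
    nlinarith [mul_le_mul (hχ.abs_le x) (hψ.abs_le (x + v)) (abs_nonneg _) hX]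
  abs_sub_le x x' v v' := by
    have hX := hχ.nonneg
    have hP := hψ.nonneg
    have hshift : ‖x + v - (x' + v')‖ ≤ ‖x - x'‖ + ‖v - v'‖ := by
      rw [add_sub_add_comm]
      exact norm_add_le _ _
    calc |χ x * ψ (x + v) - χ x' * ψ (x' + v')|
        = |χ x * (ψ (x + v) - ψ (x' + v')) + (χ x - χ x') * ψ (x' + v')| := by ring_nf
      _ ≤ |χ x| * |ψ (x + v) - ψ (x' + v')| + |χ x - χ x'| * |ψ (x' + v')| := by
        simpa only [abs_mul] using
          abs_add_le (χ x * (ψ (x + v) - ψ (x' + v'))) ((χ x - χ x') * ψ (x' + v'))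
      _ ≤ X * (P * (‖x - x'‖ + ‖v - v'‖)) + X * ‖x - x'‖ * P := by
        gcongr
        · exact hχ.abs_le x
        · exact (hψ.abs_sub_le _ _).trans (by rw [Real.rpow_one]; gcongr)
        · simpa using hχ.abs_sub_le x x'
        · exact hψ.abs_le _
      _ ≤ 2 * X * P * (‖x - x'‖ + ‖v - v'‖) := by
        nlinarith [mul_nonneg (mul_nonneg hX hP) (norm_nonneg (v - v'))]

-- The substitution `s = (1 + u)⁻¹` turns `y + (x - y) / s` into `x + u (x - y)`.
theorem integral_Ioo_kernel_eq_mul_dilationKernel [NormedSpace ℝ E] [FiniteDimensional ℝ E]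
    [Nontrivial E]
    (χ ψ : E → ℝ) (x y : E) :
    ∫ s in Ioo (0 : ℝ) 1, χ x * χ y * ψ (y + s⁻¹ • (x - y)) * (s ^ (finrank ℝ E + 1))⁻¹ =
      χ y * dilationKernel (fun v => χ x * ψ (x + v)) (Ioi 0) (x - y) := by
  obtain ⟨k, hk⟩ := Nat.exists_eq_add_one.2 (finrank_pos (R := ℝ) (M := E))
  rw [integral_Ioo_zero_one_eq_integral_Ioi_zero, dilationKernel, ← integral_const_mul, hk,
    Nat.add_sub_cancel]
  refine setIntegral_congr_fun measurableSet_Ioi fun u (hu : 0 < u) => ?_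
  have hpoint : y + (1 + u) • (x - y) = x + u • (x - y) := by module
  simp only [inv_inv, inv_pow, hpoint]
  field_simp
  ring

end SingularKernel

theorem singular_integral_bounded_on_lipschitz_general {E : Type*} [NormedAddCommGroup E]
    [NormedSpace ℝ E] [FiniteDimensional ℝ E] [Nontrivial E] [MeasurableSpace E] [BorelSpace E]
    (μ : Measure E) [μ.IsAddHaarMeasure] {χ ψ : E → ℝ} {K L : NNReal} (hχ : LipschitzWith K χ)
    (hχc : HasCompactSupport χ) (hψ : LipschitzWith L ψ) (hψc : HasCompactSupport ψ)
    (hψint : ∫ v, ψ v ∂μ = 0) {H : E → E → ℝ}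
    (hH : ∀ x y, x ≠ y → H x y =
      ∫ s in Ioo (0 : ℝ) 1, χ x * χ y * ψ (y + s⁻¹ • (x - y)) * (s ^ (finrank ℝ E + 1))⁻¹)
    {α : ℝ} (hα0 : 0 < α) (hα1 : α < 1) :
    ∃ C, ∀ (f : E → ℝ) (M : ℝ), HolderBound α M f → ∃ Tf : E → ℝ,
      (∀ x, Tendsto (fun ε => ∫ y in {y | ε < ‖x - y‖}, H x y * f y ∂μ) (𝓝[>] 0) (𝓝 (Tf x))) ∧
      HolderBound α (C * M) Tf := by
  obtain ⟨X, hX⟩ := HolderBound.exists_of_lipschitzWith hχ hχc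
  obtain ⟨P, hP⟩ := HolderBound.exists_of_lipschitzWith hψ hψc
  obtain ⟨R, hR, hχR⟩ := exists_norm_le_of_hasCompactSupport hχc
  obtain ⟨R', hR', hψR⟩ := exists_norm_le_of_hasCompactSupport hψc
  have hφ := meanZeroProfile_mul_comp_add hX hP hR hR' hχR hψR hψint
  obtain ⟨C, hC0, hC⟩ := hφ.exists_holderBound_dilationPV hα0 hα1
  have hχi : Integrable χ μ := hχ.continuous.integrable_of_hasCompactSupport hχc
  refine ⟨C * (4 * X + ∫ y, |χ y| ∂μ), fun f M hf => ?_⟩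
  have hg := (hX.of_exponent_le hα0.le hα1.le).mul hf
  have hgi : Integrable (fun y => χ y * f y) μ :=
    hχi.mul_bdd (hf.continuous hα0).aestronglyMeasurable (ae_of_all _ hf.abs_le)
  have hgM : ∫ y, |χ y * f y| ∂μ ≤ (∫ y, |χ y| ∂μ) * M := by
    rw [← integral_mul_const]
    refine integral_mono hgi.abs (hχi.abs.mul_const M) fun y => ?_
    simpa only [abs_mul] using mul_le_mul_of_nonneg_left (hf.abs_le y) (abs_nonneg (χ y))
  refine ⟨_, fun x => ?_, (hC _ _ hg hgi).mono ?_⟩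
  · refine ((hφ.bump x).tendsto_dilationPV (hφ.abs_le x) hα0 hg hgi x).congr' ?_
    filter_upwards [self_mem_nhdsWithin] with ε (hε : 0 < ε)
    refine setIntegral_congr_fun (measurableSet_lt_norm_sub x ε) fun y (hy : ε < ‖x - y‖) => ?_
    have hxy : x ≠ y := sub_ne_zero.1 (norm_pos_iff.1 (hε.trans hy))
    simp only [hH x y hxy, integral_Ioo_kernel_eq_mul_dilationKernel]
    ring
  · rw [mul_assoc C]
    gcongr
    linarith

/-- The singular integral operator with kernel
`H(x,y) = ∫₀¹ χ(x) χ(y) ψ(y + (x−y)/s) s^{−(n+1)} ds` is well defined as a principal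
value on `Λ_α(ℝⁿ)` and is bounded on `Λ_α(ℝⁿ)` for every `0 < α < 1`. -/
theorem singular_integral_bounded_on_lipschitz
    (n : ℕ) (hn : 2 ≤ n)
    (Ω B : Set (EuclideanSpace ℝ (Fin n)))
    (hΩo : IsOpen Ω) (hΩb : Bornology.IsBounded Ω)
    (hBball : ∃ c r, 0 < r ∧ B = Metric.ball c r)
    (hBΩ : B ⊆ Ω)
    (hstar : ∀ x ∈ Ω, ∀ y ∈ B, segment ℝ x y ⊆ Ω)
    (Bt : Set (EuclideanSpace ℝ (Fin n)))
    (hBt : ∃ c r, 0 < r ∧ Bt = Metric.ball c r)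
    (hΩBt : closure Ω ⊆ Bt)
    (χ : EuclideanSpace ℝ (Fin n) → ℝ)
    (hχ : ContDiff ℝ (⊤ : ℕ∞) χ) (hχc : HasCompactSupport χ)
    (hχsupp : tsupport χ ⊆ Bt) (hχ1 : ∀ x ∈ Ω, χ x = 1)
    (ψ : EuclideanSpace ℝ (Fin n) → ℝ)
    (hψ : ContDiff ℝ (⊤ : ℕ∞) ψ) (hψc : HasCompactSupport ψ)
    (hψsupp : tsupport ψ ⊆ B) (hψint : ∫ x, ψ x = 0)
    (H : EuclideanSpace ℝ (Fin n) → EuclideanSpace ℝ (Fin n) → ℝ)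
    (hH : ∀ x y, x ≠ y → H x y =
      ∫ s in Set.Ioo (0:ℝ) 1, χ x * χ y * ψ (y + s⁻¹ • (x - y)) * (s ^ (n + 1))⁻¹) :
    ∀ α : ℝ, 0 < α → α < 1 → ∃ C : ℝ,
      ∀ f : EuclideanSpace ℝ (Fin n) → ℝ,
        Continuous f →
        (∃ M : ℝ, ∀ x, |f x| ≤ M) →
        (∃ K : ℝ, ∀ x y, |f x - f y| ≤ K * ‖x - y‖ ^ α) →
        ∃ Tf : EuclideanSpace ℝ (Fin n) → ℝ,
          (∀ x : EuclideanSpace ℝ (Fin n),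
            Tendsto (fun ε : ℝ =>
                ∫ y in {y : EuclideanSpace ℝ (Fin n) | ε < ‖x - y‖}, H x y * f y)
              (𝓝[>] (0:ℝ)) (𝓝 (Tf x))) ∧
          lambdaNorm n α Tf ≤ C * lambdaNorm n α f := by
  have : Nontrivial (Fin n) := Fin.nontrivial_iff_two_le.2 hn
  obtain ⟨K, hχK⟩ := hχ.lipschitzWith_of_hasCompactSupport hχc (by simp)
  obtain ⟨L, hψL⟩ := hψ.lipschitzWith_of_hasCompactSupport hψc (by simp)
  intro α hα0 hα1
  obtain ⟨C, hC⟩ := singular_integral_bounded_on_lipschitz_general volume hχK hχc hψL hψc hψint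
    (by simpa only [finrank_euclideanSpace_fin] using hH) hα0 hα1
  refine ⟨2 * C, fun f _ hM hK => ?_⟩
  obtain ⟨Tf, hlim, hTf⟩ := hC f _ (holderBound_lambdaNorm hM hK)
  exact ⟨Tf, hlim, hTf.lambdaNorm_le.trans_eq (mul_assoc ..).symm⟩
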